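/- Let m ≥ 2, δ ≥ 2, n = m·δ. Let γ : 𝔽₂ⁿ → 𝔽₂ⁿ be a parallel S-box, γ(x₁,…,x_δ) = (γ₁(x₁),…,γ_δ(x_δ)) with each γ_j a bijection of the brick 𝔽₂^m satisfying γ_j(0) ≠ 0, and let λ : 𝔽₂ⁿ → 𝔽₂ⁿ be a bijective 𝔽₂-linear map which preserves no non-trivial type, i.e. for every subset D ⊆ 𝔽₂ⁿ in standard form of non-trivial type, the type of Dλ differs from the type of D; set ρ = λ ∘ γ (γ applied first). Let V = 𝔽₂ⁿ × 𝔽₂ⁿ, identify 𝔽₂ⁿ with ℤ/2ⁿℤ by binary expansion and write ⊞ for the resulting addition modulo 2ⁿ. Define the Feistel map 𝒫 : V → V by 𝒫(x₁, x₂) = (x₂, x₁ ⊕ ρ(x₂)), where ⊕ is the bitwise XOR, and for (k₁,k₂) ∈ V define σ_{(k₁,k₂)}(x₁,x₂) = (x₁ ⊞ k₁, x₂ ⊞ k₂). Then the subgroup Γ∞ of Sym(V) generated by the round functions {σ_k ∘ 𝒫 ∘ σ_h applied in the order σ_k, then 𝒫, then σ_h : k, h ∈ V} is primitive: it acts transitively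 on V, and every Γ∞-invariant partition of V is either {V} or the partition into singletons. -/

import Mathlib

/-!
The group of the cipher contains the Feistel map `𝒫` and all key additions `σ_k`, hence the regular
group of translations of `(ℤ/2ⁿℤ)²`. It is therefore transitive, and the block of `0` in an
invariant partition is a subgroup `U ≤ (ℤ/2ⁿℤ)²` whose cosets are permuted by the group.

Let `A = {a | (a, 0) ∈ U}`. Invariance under `𝒫` and `𝒫⁻¹` gives `A = {b | (0, b) ∈ U}`, and then
that `ρ = λ ∘ γ` maps cosets of `A` to cosets of `A`. As `A = 2^s ℤ/2ⁿℤ`, its cosets are the sets on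
which the `s` low-order bits are prescribed. They are in standard form, all of the same type, and
`γ` maps them to sets in standard form of that type; if `0 < s < n`, then `λ` would preserve this
non-trivial type. So `A` is everything, and then so is `U`, or `A = 0`.

If `A = 0` and `U ≠ 0`, then `U` contains an involution, which can only be `(h, h)` with
`h = 2^(n-1)`. Adding `h` modulo `2ⁿ` is the XOR with a fixed vector `ε`, so the invariance of `U`
under `𝒫` yields `ρ ε = ρ 0`, contradicting the injectivity of `ρ`.
-/

open Matrix

/-- The index in `Fin (m * δ)` of the `i`-th coordinate of the `j`-th brick. -/
def brickIdx (m δ : ℕ) (j : Fin δ) (i : Fin m) : Fin (m * δ) :=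
  ⟨m * j.val + i.val, by
    have h1 : m * j.val + i.val < m * (j.val + 1) := by
      rw [Nat.mul_succ]
      exact Nat.add_lt_add_left i.isLt _
    exact lt_of_lt_of_le h1 (Nat.mul_le_mul le_rfl j.isLt)⟩

/-- The projection of a vector on its `j`-th brick. -/
def brickProj (m δ : ℕ) (v : Fin (m * δ) → ZMod 2) (j : Fin δ) : Fin m → ZMod 2 :=
  fun i => v (brickIdx m δ j i)

/-- The `j`-th box of a subset `D`: the projection of `D` on the `j`-th brick. -/
def box (m δ : ℕ) (D : Set (Fin (m * δ) → ZMod 2)) (j : Fin δ) : Set (Fin m → ZMod 2) :=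
  (fun v => brickProj m δ v j) '' D

/-- A box is white if it is a singleton. -/
def IsWhite {α : Type*} (S : Set α) : Prop := ∃ a, S = {a}

/-- A box is black if it is everything. -/
def IsBlack {α : Type*} (S : Set α) : Prop := S = Set.univ

/-- A box is ruled if it is neither white nor black. -/
def IsRuled {α : Type*} (S : Set α) : Prop := ¬ IsWhite S ∧ ¬ IsBlack S

/-- The set `{v_w} × R × 𝔽₂^{m·n_b}` in standard form: the first `nw` bricks are fixed
(equal to `w`), the brick number `nw` (0-indexed) lies in `R` when `nr = 1`, and the
remaining bricks are free. -/
def StdSet (m δ nw nr : ℕ) (w : Fin δ → Fin m → ZMod 2) (R : Set (Fin m → ZMod 2)) :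
    Set (Fin (m * δ) → ZMod 2) :=
  { v | (∀ j : Fin δ, (j : ℕ) < nw → brickProj m δ v j = w j) ∧
        (nr = 1 → ∀ j : Fin δ, (j : ℕ) = nw → brickProj m δ v j ∈ R) }

/-- `D` is in standard form of type `(nw, nr, nb)`. -/
def StdForm (m δ : ℕ) (D : Set (Fin (m * δ) → ZMod 2)) (nw nr nb : ℕ) : Prop :=
  nw + nr + nb = δ ∧ nr ≤ 1 ∧
  ∃ (w : Fin δ → Fin m → ZMod 2) (R : Set (Fin m → ZMod 2)),
    (nr = 1 → 2 ≤ R.ncard ∧ R.ncard ≤ 2 ^ m - 1) ∧ D = StdSet m δ nw nr w R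

/-- `D` has type `(nw, nr, nb)`: its first `nw` boxes are white, the next `nr` boxes are
ruled, and its last `nb` boxes are black. -/
def HasType (m δ : ℕ) (D : Set (Fin (m * δ) → ZMod 2)) (nw nr nb : ℕ) : Prop :=
  nw + nr + nb = δ ∧ nr ≤ 1 ∧
  ∀ j : Fin δ,
    ((j : ℕ) < nw → IsWhite (box m δ D j)) ∧
    (nw ≤ (j : ℕ) → (j : ℕ) < nw + nr → IsRuled (box m δ D j)) ∧
    (nw + nr ≤ (j : ℕ) → IsBlack (box m δ D j))

/-- `D` and `E` have the same type: corresponding boxes have the same kind. -/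
def SameType (m δ : ℕ) (D E : Set (Fin (m * δ) → ZMod 2)) : Prop :=
  ∀ j : Fin δ,
    (IsWhite (box m δ D j) ↔ IsWhite (box m δ E j)) ∧
    (IsBlack (box m δ D j) ↔ IsBlack (box m δ E j))

lemma m_le_mul (m d : ℕ) (h : 1 ≤ d) : m ≤ m * d := by
  calc m = m * 1 := (Nat.mul_one m).symm
  _ ≤ m * d := Nat.mul_le_mul le_rfl h

lemma shift_lt (m δ a : ℕ) (ha : a ≤ δ) (k : ℕ) (hk : k < m * (δ - a)) :
    m * a + k < m * δ := by
  have h := Nat.add_lt_add_left hk (m * a)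
  rwa [← Nat.mul_add, Nat.add_sub_cancel' ha] at h

/-- The index in `Fin (m * δ)` obtained by skipping the first `a` bricks. -/
def shiftIdx (m δ a : ℕ) (ha : a ≤ δ) (k : Fin (m * (δ - a))) : Fin (m * δ) :=
  ⟨m * a + k.val, shift_lt m δ a ha k.val k.isLt⟩

/-- The submatrix `Λ_{(a+1,b+1):(δ,δ)}` (blocks with row brick ≥ a and column brick ≥ b). -/
def subBlock (m δ : ℕ) (Λ : Matrix (Fin (m * δ)) (Fin (m * δ)) (ZMod 2))
    (a b : ℕ) (ha : a ≤ δ) (hb : b ≤ δ) :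
    Matrix (Fin (m * (δ - a))) (Fin (m * (δ - b))) (ZMod 2) :=
  Matrix.of fun r c => Λ (shiftIdx m δ a ha r) (shiftIdx m δ b hb c)

/-- The column of blocks `Λ_{(a+1,j+1):(δ,j+1)}` (row bricks ≥ a, column brick j). -/
def subColBlock (m δ : ℕ) (Λ : Matrix (Fin (m * δ)) (Fin (m * δ)) (ZMod 2))
    (a : ℕ) (ha : a ≤ δ) (j : Fin δ) :
    Matrix (Fin (m * (δ - a))) (Fin m) (ZMod 2) :=
  Matrix.of fun r c => Λ (shiftIdx m δ a ha r) (brickIdx m δ j c)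

/-- The row of blocks `Λ_{(j+1,1):(j+1,c2)}` (row brick j, column bricks < c2). -/
def rowBlock (m δ : ℕ) (Λ : Matrix (Fin (m * δ)) (Fin (m * δ)) (ZMod 2))
    (j : Fin δ) (c2 : ℕ) (hc : c2 ≤ δ) :
    Matrix (Fin m) (Fin (m * c2)) (ZMod 2) :=
  Matrix.of fun i c => Λ (brickIdx m δ j i) (Fin.castLE (Nat.mul_le_mul le_rfl hc) c)

/-- The block `Λ_{j+1, j'+1}`. -/
def block (m δ : ℕ) (Λ : Matrix (Fin (m * δ)) (Fin (m * δ)) (ZMod 2)) (j j' : Fin δ) :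
    Matrix (Fin m) (Fin m) (ZMod 2) :=
  Matrix.of fun i i' => Λ (brickIdx m δ j i) (brickIdx m δ j' i')

/-- The set `R × 𝔽₂^{m (d-1)}` of vectors of `d` bricks whose first brick lies in `R`. -/
def rulDomain (m d : ℕ) (hd : 1 ≤ d) (R : Set (Fin m → ZMod 2)) :
    Set (Fin (m * d) → ZMod 2) :=
  { u | (fun i : Fin m => u (Fin.castLE (m_le_mul m d hd) i)) ∈ R }

/-- The identification `𝔽₂ⁿ → ℤ/2ⁿℤ` by binary expansion: `(a₀,…,a_{n-1}) ↦ ∑ aᵢ 2ⁱ`. -/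
def vecToZMod (n : ℕ) (v : Fin n → ZMod 2) : ZMod (2 ^ n) :=
  ∑ i : Fin n, ((v i).val : ZMod (2 ^ n)) * 2 ^ (i : ℕ)

/-- The inverse identification `ℤ/2ⁿℤ → 𝔽₂ⁿ`: the binary digits of the representative. -/
def zmodToVec (n : ℕ) (x : ZMod (2 ^ n)) : Fin n → ZMod 2 :=
  fun i => (((x.val / 2 ^ (i : ℕ)) % 2 : ℕ) : ZMod 2)

/-- Addition modulo `2ⁿ` transported to `𝔽₂ⁿ` via binary expansion: `v ⊞ k`. -/
def boxAdd (n : ℕ) (v k : Fin n → ZMod 2) : Fin n → ZMod 2 :=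
  zmodToVec n (vecToZMod n v + vecToZMod n k)

section Primitivity

open scoped Pointwise

variable {G X A : Type*} [Group G] [MulAction G X]

/-- Reading `X` in the additive group `A` through `e`, the map `f` sends every coset of the subgroup
`H` into a coset of `H`. -/
def MapsCosets [AddGroup A] (e : X → A) (f : X → X) (H : AddSubgroup A) : Prop :=
  ∀ ⦃x y⦄, e y - e x ∈ H → e (f y) - e (f x) ∈ H

theorem exists_addSubgroup_of_isBlock [AddGroup A] (e : X ≃ A)
    (htrans : ∀ a : A, ∃ t : G, ∀ x, e (t • x) = e x + a)
    {B : Set X} (hB : MulAction.IsBlock G B) (h0 : e.symm 0 ∈ B) :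
    ∃ H : AddSubgroup A, (∀ x, x ∈ B ↔ e x ∈ H) ∧ ∀ g : G, MapsCosets e (g • ·) H := by
  choose t ht using htrans
  have mem_translate (a : A) (x : X) : x ∈ t a • B ↔ e.symm (e x - a) ∈ B := by
    have h := ht a ((t a)⁻¹ • x)
    rw [smul_inv_smul] at h
    rw [Set.mem_smul_set_iff_inv_smul_mem, h, add_sub_cancel_right, e.symm_apply_apply]
  have self_mem_translate (x : X) : x ∈ t (e x) • B := by
    rwa [mem_translate, sub_self]
  let H : AddSubgroup A := AddSubgroup.ofSub {a | e.symm a ∈ B} ⟨0, h0⟩ fun a ha b hb => by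
    have hbB : t b • B = (1 : G) • B := hB.smul_eq_smul_of_nonempty
      ⟨e.symm b, by simpa using self_mem_translate (e.symm b), by simpa using hb⟩
    have hab : e.symm a ∈ t b • B := by simpa [hbB] using ha
    simpa [mem_translate, sub_eq_add_neg] using hab
  have mem_H (a : A) : a ∈ H ↔ e.symm a ∈ B := Iff.rfl
  refine ⟨H, fun x => by simp [mem_H], fun g x y hxy => ?_⟩
  have hgx : (g * t (e x)) • B = t (e (g • x)) • B := hB.smul_eq_smul_of_nonempty
    ⟨g • x, by simpa [mul_smul] using self_mem_translate x, self_mem_translate _⟩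
  rw [mem_H, ← mem_translate, ← hgx, mul_smul, Set.smul_mem_smul_set_iff, mem_translate]
  exact hxy

theorem isPreprimitive_of_mapsCosets [AddGroup A] (e : X ≃ A)
    (htrans : ∀ a : A, ∃ t : G, ∀ x, e (t • x) = e x + a)
    (hH : ∀ H : AddSubgroup A, (∀ g : G, MapsCosets e (g • ·) H) → H = ⊥ ∨ H = ⊤) :
    MulAction.IsPreprimitive G X := by
  have : MulAction.IsPretransitive G X := ⟨fun x y => by
    obtain ⟨t, ht⟩ := htrans (-e x + e y)
    exact ⟨t, e.injective (by rw [ht, add_neg_cancel_left])⟩⟩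
  refine .of_isTrivialBlock_base (e.symm 0) fun {B} h0 hB => ?_
  obtain ⟨H, hBH, hmaps⟩ := exists_addSubgroup_of_isBlock e htrans hB h0
  rcases hH H hmaps with rfl | rfl
  · refine .inl fun x hx y hy => e.injective ?_
    rw [(hBH x).1 hx, (hBH y).1 hy]
  · exact .inr (Set.eq_univ_of_forall fun x => (hBH x).2 trivial)

theorem isBlock_of_mem_invariant_partition {P : Set (Set X)} (hP : Setoid.IsPartition P)
    (hinv : ∀ b ∈ P, ∀ g : G, g • b ∈ P) {b : Set X} (hb : b ∈ P) : MulAction.IsBlock G b :=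
  fun g₁ g₂ hne => hP.pairwiseDisjoint (hinv b hb g₁) (hinv b hb g₂) hne

theorem invariant_partition_trivial [MulAction.IsPreprimitive G X] {P : Set (Set X)}
    (hP : Setoid.IsPartition P) (hinv : ∀ b ∈ P, ∀ g : G, g • b ∈ P) :
    P = {Set.univ} ∨ P = Set.range fun x : X => ({x} : Set X) := by
  by_cases huniv : Set.univ ∈ P
  · refine .inl (Set.eq_singleton_iff_unique_mem.2 ⟨huniv, fun b hb => ?_⟩)
    obtain ⟨x, hx⟩ := Setoid.nonempty_of_mem_partition hP hb
    exact (hP.2 x).unique ⟨hb, hx⟩ ⟨huniv, trivial⟩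
  · have hsub (b) (hb : b ∈ P) : b.Subsingleton :=
      (MulAction.IsPreprimitive.isTrivialBlock_of_isBlock
        (isBlock_of_mem_invariant_partition hP hinv hb)).resolve_right fun h => huniv (h ▸ hb)
    refine .inr (Set.ext fun b => ⟨fun hb => ?_, ?_⟩)
    · obtain ⟨x, hx⟩ := Setoid.nonempty_of_mem_partition hP hb
      exact ⟨x, ((hsub b hb).eq_singleton_of_mem hx).symm⟩
    · rintro ⟨x, rfl⟩
      obtain ⟨b, ⟨hb, hx⟩, -⟩ := hP.2 x
      simpa only [← (hsub b hb).eq_singleton_of_mem hx] using hb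

end Primitivity

section Feistel

variable {X A : Type*} [AddGroup X]

/-- The Feistel map `(x₁, x₂) ↦ (x₂, x₁ + ρ x₂)` on two branches, as a permutation. -/
def feistel (ρ : X → X) : Equiv.Perm (X × X) where
  toFun x := (x.2, x.1 + ρ x.2)
  invFun x := (x.2 - ρ x.1, x.1)
  left_inv x := by simp
  right_inv x := by simp

variable {ρ : X → X}

theorem mk_zero_mem_iff_of_mapsCosets_feistel [AddGroup A] {e : X ≃ A} {U : AddSubgroup (A × A)}
    (hzero : 0 ∈ Set.range ρ)
    (hU : MapsCosets (e.prodCongr e) (feistel ρ) U)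
    (hU' : MapsCosets (e.prodCongr e) (feistel ρ).symm U) (a : A) :
    (a, 0) ∈ U ↔ (0, a) ∈ U := by
  -- The Feistel map swaps the branches wherever `x₂ = z`, as `ρ z = 0`.
  obtain ⟨z, hz⟩ := hzero
  constructor
  · intro ha
    simpa [feistel, hz] using @hU (e.symm 0, z) (e.symm a, z) (by simpa using ha)
  · intro ha
    simpa [feistel, hz] using @hU' (z, e.symm 0) (z, e.symm a) (by simpa using ha)

theorem mapsCosets_of_mapsCosets_feistel [AddGroup A] {e : X ≃ A} {U : AddSubgroup (A × A)}
    (hzero : 0 ∈ Set.range ρ)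
    (hU : MapsCosets (e.prodCongr e) (feistel ρ) U)
    (hU' : MapsCosets (e.prodCongr e) (feistel ρ).symm U) :
    MapsCosets e ρ (U.comap (AddMonoidHom.inl A A)) := by
  have hswap := mk_zero_mem_iff_of_mapsCosets_feistel hzero hU hU'
  intro x y hxy
  have hleft : (e y - e x, 0) ∈ U := hxy
  have hstep : (e y - e x, e (ρ y) - e (ρ x)) ∈ U := by
    simpa [feistel] using @hU (0, x) (0, y) (by simpa using (hswap _).1 hleft)
  refine (hswap _).2 ?_
  simpa using U.add_mem (U.neg_mem hleft) hstep

theorem not_diagonal_mem_of_mapsCosets_feistel [AddCommGroup A] {e : X ≃ A}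
    {U : AddSubgroup (A × A)} (hρ : Function.Injective ρ)
    (hU : MapsCosets (e.prodCongr e) (feistel ρ) U) (hright : ∀ a, (0, a) ∈ U → a = 0)
    {ε : X} {p : A} (hε : ∀ x, e (ε + x) = e x + p) (hp : p ≠ 0) : (p, p) ∉ U := by
  intro hpp
  have hε_apply : e ε = e 0 + p := by simpa using hε 0
  have hstep : (p, e (ρ ε) + p - e (ρ 0)) ∈ U := by
    simpa [feistel, hε, hε_apply] using @hU (0, 0) (ε, ε) (by simpa [hε_apply])
  have heq : e (ρ ε) - e (ρ 0) = 0 :=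
    hright _ (by simpa [add_sub_right_comm] using U.sub_mem hstep hpp)
  have hε_zero : ε = 0 := hρ (e.injective (sub_eq_zero.1 heq))
  exact hp (by simpa [hε_zero] using hε 0)

end Feistel

section BinaryExpansion

variable {n s : ℕ}

theorem vecToZMod_eq_natCast (v : Fin n → ZMod 2) :
    vecToZMod n v =
      (finFunctionFinEquiv fun i => (⟨(v i).val, (v i).val_lt⟩ : Fin 2) : ℕ) := by
  simp [vecToZMod, -ZMod.natCast_val]

theorem zmodToVec_vecToZMod (v : Fin n → ZMod 2) : zmodToVec n (vecToZMod n v) = v := by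
  funext i
  rw [zmodToVec, vecToZMod_eq_natCast, ZMod.val_cast_of_lt (Fin.isLt _),
    ← finFunctionFinEquiv_symm_apply_val, Equiv.symm_apply_apply, ZMod.natCast_zmod_val]

/-- Binary expansion as a bijection `𝔽₂ⁿ ≃ ℤ/2ⁿℤ`. -/
def binaryEquiv (n : ℕ) : (Fin n → ZMod 2) ≃ ZMod (2 ^ n) where
  toFun := vecToZMod n
  invFun := zmodToVec n
  left_inv := zmodToVec_vecToZMod
  right_inv := Function.LeftInverse.rightInverse_of_card_le zmodToVec_vecToZMod
    (by simp [ZMod.card])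

theorem boxAdd_zmodToVec (v : Fin n → ZMod 2) (a : ZMod (2 ^ n)) :
    boxAdd n v (zmodToVec n a) = (binaryEquiv n).symm (binaryEquiv n v + a) :=
  congrArg (fun b => zmodToVec n (vecToZMod n v + b)) ((binaryEquiv n).apply_symm_apply a)

theorem castHom_vecToZMod (hs : s ≤ n) (v : Fin n → ZMod 2) :
    ZMod.castHom (pow_dvd_pow 2 hs) (ZMod (2 ^ s)) (vecToZMod n v) =
      vecToZMod s (v ∘ Fin.castLE hs) := by
  obtain ⟨t, rfl⟩ := Nat.exists_eq_add_of_le hs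
  have two_pow : (2 : ZMod (2 ^ s)) ^ s = 0 := by exact_mod_cast ZMod.natCast_self (2 ^ s)
  simp only [vecToZMod, map_add, map_sum, map_mul, map_natCast, map_pow, map_ofNat,
    Fin.sum_univ_add, Fin.val_natAdd, pow_add, two_pow, zero_mul, mul_zero, Finset.sum_const_zero,
    add_zero]
  rfl

theorem two_pow_add_two_pow (n : ℕ) : (2 ^ n + 2 ^ n : ZMod (2 ^ (n + 1))) = 0 := by
  rw [← two_mul, ← pow_succ']
  exact_mod_cast ZMod.natCast_self (2 ^ (n + 1))

theorem vecToZMod_single_last_add (v : Fin (n + 1) → ZMod 2) :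
    vecToZMod (n + 1) (Pi.single (Fin.last n) 1 + v) = vecToZMod (n + 1) v + 2 ^ n := by
  have carry (b : ZMod 2) :
      ((1 + b).val : ZMod (2 ^ (n + 1))) * 2 ^ n = b.val * 2 ^ n + 2 ^ n := by
    have hb : ((1 + b).val : ZMod (2 ^ (n + 1))) + b.val = 1 := by
      have hval : ∀ b : ZMod 2, (1 + b).val + b.val = 1 := by decide
      rw [← Nat.cast_add, hval b, Nat.cast_one]
    linear_combination 2 ^ n * hb - b.val * two_pow_add_two_pow n
  simp [vecToZMod, Fin.sum_univ_castSucc, carry, add_assoc, -ZMod.natCast_val]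

end BinaryExpansion

theorem exists_eq_ker_castHom {n : ℕ} (H : AddSubgroup (ZMod n)) :
    ∃ (d : ℕ) (hd : d ∣ n), H = (ZMod.castHom hd (ZMod d)).toAddMonoidHom.ker := by
  obtain ⟨d, hd⟩ := Int.subgroup_cyclic (H.comap (Int.castAddHom (ZMod n)))
  have mem_iff (z : ℤ) : (z : ZMod n) ∈ H ↔ (d.natAbs : ℤ) ∣ z := by
    rw [Int.natAbs_dvd, ← Int.mem_zmultiples_iff, AddSubgroup.zmultiples_eq_closure, ← hd]
    rfl
  have hdn : d.natAbs ∣ n := by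
    rw [← Int.natCast_dvd_natCast, ← mem_iff]
    simp
  refine ⟨d.natAbs, hdn, AddSubgroup.ext fun a => ?_⟩
  obtain ⟨z, rfl⟩ := ZMod.intCast_surjective a
  rw [mem_iff, AddMonoidHom.mem_ker]
  simp [ZMod.intCast_zmod_eq_zero_iff_dvd]

theorem zmod_eq_of_add_self_eq_zero {n : ℕ} [NeZero n] {a b : ZMod n} (ha : a ≠ 0) (hb : b ≠ 0)
    (haa : a + a = 0) (hbb : b + b = 0) : a = b := by
  have two_mul_val {c : ZMod n} (hc : c ≠ 0) (hcc : c + c = 0) : 2 * c.val = n :=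
    (c.neg_eq_self_iff.1 (neg_eq_of_add_eq_zero_left hcc)).resolve_left hc
  exact ZMod.val_injective n <| Nat.eq_of_mul_eq_mul_left two_pos
    ((two_mul_val ha haa).trans (two_mul_val hb hbb).symm)

theorem exists_binaryEquiv_add_eq_add {n : ℕ} {p : ZMod (2 ^ n)} (hp : p ≠ 0) (hpp : p + p = 0) :
    ∃ ε : Fin n → ZMod 2, ∀ v, binaryEquiv n (ε + v) = binaryEquiv n v + p := by
  cases n with
  | zero => exact absurd (Subsingleton.elim (α := ZMod 1) p 0) hp
  | succ n =>
    have hne : (2 ^ n : ZMod (2 ^ (n + 1))) ≠ 0 := fun h => by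
      have hdvd := (ZMod.natCast_eq_zero_iff (2 ^ n) (2 ^ (n + 1))).1 (by exact_mod_cast h)
      exact absurd ((Nat.pow_dvd_pow_iff_le_right one_lt_two).1 hdvd) (by omega)
    have htwo : (2 ^ n + 2 ^ n : ZMod (2 ^ (n + 1))) = 0 := two_pow_add_two_pow n
    rw [zmod_eq_of_add_self_eq_zero hp hne hpp htwo]
    exact ⟨Pi.single (Fin.last n) 1, vecToZMod_single_last_add⟩

theorem exists_mem_add_self_eq_zero {A : Type*} [AddGroup A] {k : ℕ} (hA : Nat.card A = 2 ^ k)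
    {H : AddSubgroup A} (hH : H ≠ ⊥) : ∃ a ∈ H, a ≠ 0 ∧ a + a = 0 := by
  have : Finite A := Nat.finite_of_card_ne_zero (by simp [hA])
  obtain ⟨j, -, hj⟩ := (Nat.dvd_prime_pow Nat.prime_two).1 (hA ▸ H.card_addSubgroup_dvd_card)
  have hj0 : j ≠ 0 := fun h => hH (AddSubgroup.card_eq_one.1 (by simp [hj, h]))
  obtain ⟨a, ha⟩ := exists_prime_addOrderOf_dvd_card' 2 (hj ▸ dvd_pow_self 2 hj0)
  refine ⟨a, a.2, fun h => ?_, ?_⟩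
  · obtain rfl : a = 0 := Subtype.ext h
    simp at ha
  · simpa [ha, two_nsmul] using congrArg (fun b : H => (b : A)) (addOrderOf_nsmul_eq_zero a)

section RoundFunctions

variable {n : ℕ} {ρ : (Fin n → ZMod 2) → (Fin n → ZMod 2)}

theorem eq_bot_or_eq_top_of_mapsCosets_feistel {U : AddSubgroup (ZMod (2 ^ n) × ZMod (2 ^ n))}
    (hρ : Function.Bijective ρ)
    (hH : ∀ H, MapsCosets (binaryEquiv n) ρ H → H = ⊥ ∨ H = ⊤)
    (hU : MapsCosets ((binaryEquiv n).prodCongr (binaryEquiv n)) (feistel ρ) U)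
    (hU' : MapsCosets ((binaryEquiv n).prodCongr (binaryEquiv n)) (feistel ρ).symm U) :
    U = ⊥ ∨ U = ⊤ := by
  have hswap := mk_zero_mem_iff_of_mapsCosets_feistel (hρ.surjective 0) hU hU'
  rcases hH _ (mapsCosets_of_mapsCosets_feistel (hρ.surjective 0) hU hU') with hbot | htop
  · have hleft (a) (ha : (a, 0) ∈ U) : a = 0 := (AddSubgroup.eq_bot_iff_forall _).1 hbot a ha
    have hright (b) (hb : (0, b) ∈ U) : b = 0 := hleft b ((hswap b).2 hb)
    by_contra! hne
    obtain ⟨⟨a, b⟩, hab, hab_ne, hab_two⟩ :=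
      exists_mem_add_self_eq_zero (k := n + n) (by simp [pow_add]) hne.1
    obtain ⟨ha_two, hb_two⟩ := Prod.mk_eq_zero.1 hab_two
    have ha : a ≠ 0 := by
      rintro rfl
      exact hab_ne (by rw [hright b hab]; rfl)
    have hb : b ≠ 0 := by
      rintro rfl
      exact hab_ne (by rw [hleft a hab]; rfl)
    obtain rfl := zmod_eq_of_add_self_eq_zero ha hb ha_two hb_two
    obtain ⟨ε, hε⟩ := exists_binaryEquiv_add_eq_add ha ha_two
    exact not_diagonal_mem_of_mapsCosets_feistel hρ.injective hU hright hε ha hab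
  · have hleft (a) : (a, 0) ∈ U := (AddSubgroup.eq_top_iff' _).1 htop a
    refine .inr ((AddSubgroup.eq_top_iff' U).2 fun ⟨a, b⟩ => ?_)
    simpa using U.add_mem (hleft a) ((hswap b).1 (hleft b))

/-- The round functions `σ_k`, then the Feistel map of `ρ`, then `σ_h`, where `σ` is the addition
of a key modulo `2ⁿ` on each branch. -/
def roundFunctions (n : ℕ) (ρ : (Fin n → ZMod 2) → (Fin n → ZMod 2)) :
    Set (Equiv.Perm ((Fin n → ZMod 2) × (Fin n → ZMod 2))) :=
  {g | ∃ k₁ k₂ h₁ h₂, ∀ x : (Fin n → ZMod 2) × (Fin n → ZMod 2),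
    g x = (boxAdd n (boxAdd n x.2 k₂) h₁,
      boxAdd n (boxAdd n x.1 k₁ + ρ (boxAdd n x.2 k₂)) h₂)}

/-- The key addition `σ_k`, with the key `k` given as an element of `(ℤ/2ⁿℤ)²`. -/
def keyAdd (n : ℕ) (k : ZMod (2 ^ n) × ZMod (2 ^ n)) :
    Equiv.Perm ((Fin n → ZMod 2) × (Fin n → ZMod 2)) :=
  ((binaryEquiv n).prodCongr (binaryEquiv n)).symm.permCongr (Equiv.addRight k)

theorem prodCongr_keyAdd (k : ZMod (2 ^ n) × ZMod (2 ^ n))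
    (x : (Fin n → ZMod 2) × (Fin n → ZMod 2)) :
    (binaryEquiv n).prodCongr (binaryEquiv n) (keyAdd n k x) =
      (binaryEquiv n).prodCongr (binaryEquiv n) x + k :=
  Equiv.apply_symm_apply _ _

theorem keyAdd_mul_feistel_mem (ρ : (Fin n → ZMod 2) → (Fin n → ZMod 2))
    (k : ZMod (2 ^ n) × ZMod (2 ^ n)) : keyAdd n k * feistel ρ ∈ roundFunctions n ρ := by
  refine ⟨zmodToVec n 0, zmodToVec n 0, zmodToVec n k.1, zmodToVec n k.2, fun x => ?_⟩
  simp only [boxAdd_zmodToVec, add_zero, Equiv.symm_apply_apply]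
  rfl

theorem feistel_mem_closure_roundFunctions (ρ : (Fin n → ZMod 2) → (Fin n → ZMod 2)) :
    feistel ρ ∈ Subgroup.closure (roundFunctions n ρ) := by
  have hzero : keyAdd n 0 = 1 := Equiv.ext fun x =>
    ((binaryEquiv n).prodCongr (binaryEquiv n)).injective <| by
      rw [prodCongr_keyAdd, add_zero, Equiv.Perm.one_apply]
  simpa [hzero] using Subgroup.subset_closure (keyAdd_mul_feistel_mem ρ 0)

theorem keyAdd_mem_closure_roundFunctions (ρ : (Fin n → ZMod 2) → (Fin n → ZMod 2))
    (k : ZMod (2 ^ n) × ZMod (2 ^ n)) : keyAdd n k ∈ Subgroup.closure (roundFunctions n ρ) :=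
  (Subgroup.mul_mem_cancel_right _ (feistel_mem_closure_roundFunctions ρ)).1
    (Subgroup.subset_closure (keyAdd_mul_feistel_mem ρ k))

theorem isPreprimitive_closure_roundFunctions (hρ : Function.Bijective ρ)
    (hH : ∀ H, MapsCosets (binaryEquiv n) ρ H → H = ⊥ ∨ H = ⊤) :
    MulAction.IsPreprimitive (Subgroup.closure (roundFunctions n ρ))
      ((Fin n → ZMod 2) × (Fin n → ZMod 2)) :=
  isPreprimitive_of_mapsCosets ((binaryEquiv n).prodCongr (binaryEquiv n))
    (fun k => ⟨⟨keyAdd n k, keyAdd_mem_closure_roundFunctions ρ k⟩, prodCongr_keyAdd k⟩)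
    fun _ hU => eq_bot_or_eq_top_of_mapsCosets_feistel hρ hH
      (hU ⟨feistel ρ, feistel_mem_closure_roundFunctions ρ⟩)
      (hU ⟨(feistel ρ)⁻¹, inv_mem (feistel_mem_closure_roundFunctions ρ)⟩)

end RoundFunctions

section Bricks

variable {m δ : ℕ}

theorem brickIdx_bijective :
    Function.Bijective fun p : Fin δ × Fin m => brickIdx m δ p.1 p.2 := by
  convert (finProdFinEquiv.trans (finCongr (mul_comm δ m))).bijective
  ext
  simp [brickIdx, add_comm]

theorem brickProj_bijective : Function.Bijective (brickProj m δ) :=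
  (Equiv.curry (Fin δ) (Fin m) (ZMod 2)).bijective.comp
    ⟨brickIdx_bijective.surjective.injective_comp_right,
      brickIdx_bijective.injective.surjective_comp_right⟩

theorem isWhite_image_iff {α β : Type*} {f : α → β} (hf : Function.Injective f) {S : Set α} :
    IsWhite (f '' S) ↔ IsWhite S := by
  simp only [IsWhite, Set.exists_eq_singleton_iff_nonempty_subsingleton, Set.image_nonempty,
    hf.subsingleton_image_iff]

theorem isBlack_image_iff {α β : Type*} {f : α → β} (hf : Function.Bijective f) {S : Set α} :
    IsBlack (f '' S) ↔ IsBlack S := by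
  rw [IsBlack, ← Set.image_univ_of_surjective hf.surjective, hf.injective.image_injective.eq_iff,
    IsBlack]

theorem SameType.symm {D E : Set (Fin (m * δ) → ZMod 2)} (h : SameType m δ D E) :
    SameType m δ E D :=
  fun j => ⟨(h j).1.symm, (h j).2.symm⟩

theorem SameType.trans {D E F : Set (Fin (m * δ) → ZMod 2)} (hDE : SameType m δ D E)
    (hEF : SameType m δ E F) : SameType m δ D F :=
  fun j => ⟨(hDE j).1.trans (hEF j).1, (hDE j).2.trans (hEF j).2⟩

/-- The map `φ` is parallel: it acts on the `j`-th brick by `φbrick j`, separately for each `j`. -/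
def IsParallel (m δ : ℕ) (φ : (Fin (m * δ) → ZMod 2) → (Fin (m * δ) → ZMod 2))
    (φbrick : Fin δ → (Fin m → ZMod 2) → (Fin m → ZMod 2)) : Prop :=
  ∀ v (j : Fin δ), brickProj m δ (φ v) j = φbrick j (brickProj m δ v j)

namespace IsParallel

variable {φ : (Fin (m * δ) → ZMod 2) → (Fin (m * δ) → ZMod 2)}
  {φbrick : Fin δ → (Fin m → ZMod 2) → (Fin m → ZMod 2)}

theorem bijective (hφ : IsParallel m δ φ φbrick) (hbij : ∀ j, Function.Bijective (φbrick j)) :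
    Function.Bijective φ := by
  have hcomp : brickProj m δ ∘ φ = Pi.map φbrick ∘ brickProj m δ := funext₂ hφ
  rw [← Function.Bijective.of_comp_iff' brickProj_bijective, hcomp]
  exact (Function.Bijective.piMap hbij).comp brickProj_bijective

theorem box_image (hφ : IsParallel m δ φ φbrick) (D : Set (Fin (m * δ) → ZMod 2)) (j : Fin δ) :
    box m δ (φ '' D) j = φbrick j '' box m δ D j := by
  simp only [box, Set.image_image, hφ _ j]

theorem sameType_image (hφ : IsParallel m δ φ φbrick) (hbij : ∀ j, Function.Bijective (φbrick j))
    (D : Set (Fin (m * δ) → ZMod 2)) : SameType m δ D (φ '' D) := by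
  intro j
  rw [hφ.box_image, isWhite_image_iff (hbij j).injective, isBlack_image_iff (hbij j)]
  exact ⟨Iff.rfl, Iff.rfl⟩

theorem stdForm_image (hφ : IsParallel m δ φ φbrick) (hbij : ∀ j, Function.Bijective (φbrick j))
    {D : Set (Fin (m * δ) → ZMod 2)} {nw nr nb : ℕ} (hD : StdForm m δ D nw nr nb) :
    StdForm m δ (φ '' D) nw nr nb := by
  obtain ⟨hsum, hnr, w, R, hR, rfl⟩ := hD
  -- If `nw = δ`, there is no brick to constrain and any injection does.
  obtain ⟨σ, hσ, hσ_eq⟩ : ∃ σ : (Fin m → ZMod 2) → (Fin m → ZMod 2),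
      Function.Injective σ ∧ ∀ j : Fin δ, (j : ℕ) = nw → φbrick j = σ := by
    by_cases hnw : nw < δ
    · exact ⟨φbrick ⟨nw, hnw⟩, (hbij _).injective, fun j hj => congrArg φbrick (Fin.ext hj)⟩
    · exact ⟨id, Function.injective_id, fun j hj => absurd (hj ▸ j.isLt) hnw⟩
  refine ⟨hsum, hnr, fun j => φbrick j (w j), σ '' R, ?_, ?_⟩
  · rwa [Set.ncard_image_of_injective R hσ]
  · rw [← (hφ.bijective hbij).surjective.image_preimage (StdSet m δ nw nr _ (σ '' R))]
    congr 1
    ext v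
    simp only [StdSet, Set.mem_preimage, Set.mem_ofPred_eq, hφ _ _, (hbij _).injective.eq_iff]
    refine and_congr_right' (forall_congr' fun _ => forall₂_congr fun j hj => ?_)
    rw [hσ_eq j hj, hσ.mem_set_image]

end IsParallel

end Bricks

section LowCylinder

variable {n s : ℕ}

/-- The vectors whose `s` low-order bits are those of `c`: under binary expansion, these are the
cosets of `2^s ℤ/2ⁿℤ`. -/
def lowCylinder (s : ℕ) (c : Fin n → ZMod 2) : Set (Fin n → ZMod 2) :=
  {v | ∀ i : Fin n, (i : ℕ) < s → v i = c i}

theorem image_add_lowCylinder (c d : Fin n → ZMod 2) :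
    (· + d) '' lowCylinder s c = lowCylinder s (c + d) := by
  ext v
  simp [lowCylinder, sub_eq_iff_eq_add, ← sub_eq_add_neg]

theorem ncard_lowCylinder_eq (c d : Fin n → ZMod 2) :
    (lowCylinder s c).ncard = (lowCylinder s d).ncard := by
  rw [← add_sub_cancel c d, ← image_add_lowCylinder c (d - c),
    Set.ncard_image_of_injective _ (add_left_injective _)]

theorem image_lowCylinder_eq_of_mapsTo {ρ : (Fin n → ZMod 2) → (Fin n → ZMod 2)}
    (hρ : Function.Injective ρ) {c d : Fin n → ZMod 2}
    (h : Set.MapsTo ρ (lowCylinder s c) (lowCylinder s d)) :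
    ρ '' lowCylinder s c = lowCylinder s d :=
  Set.eq_of_subset_of_ncard_le h.image_subset <| by
    rw [Set.ncard_image_of_injective _ hρ, ncard_lowCylinder_eq c d]

theorem add_single_mem_lowCylinder_iff {c : Fin n → ZMod 2} {i : Fin n} :
    c + Pi.single i 1 ∈ lowCylinder s c ↔ s ≤ i := by
  simp only [lowCylinder, Set.mem_ofPred_eq, Pi.add_apply, add_eq_left, Pi.single_apply,
    ite_eq_right_iff, one_ne_zero, imp_false]
  exact ⟨fun h => not_lt.1 fun hi => h i hi rfl, fun h j hj hji => by omega⟩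

theorem two_le_ncard_lowCylinder (hs : s < n) (c : Fin n → ZMod 2) :
    2 ≤ (lowCylinder s c).ncard := by
  refine (Set.one_lt_ncard (Set.toFinite _)).2 ⟨c, fun _ _ => rfl, c + Pi.single ⟨s, hs⟩ 1,
    add_single_mem_lowCylinder_iff.2 le_rfl, ?_⟩
  simp

theorem ncard_lowCylinder_lt (hs : 0 < s) (hn : 0 < n) (c : Fin n → ZMod 2) :
    (lowCylinder s c).ncard < 2 ^ n := by
  have hssub : lowCylinder s c ⊂ Set.univ :=
    Set.ssubset_univ_iff.2 fun h => hs.not_ge <|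
      add_single_mem_lowCylinder_iff (i := ⟨0, hn⟩).1 (h ▸ Set.mem_univ _)
  simpa [Set.ncard_univ] using Set.ncard_lt_ncard hssub

theorem exists_sub_mem_iff_mem_lowCylinder (H : AddSubgroup (ZMod (2 ^ n))) :
    ∃ s ≤ n, ∀ v w, binaryEquiv n v - binaryEquiv n w ∈ H ↔ v ∈ lowCylinder s w := by
  obtain ⟨d, hd, rfl⟩ := exists_eq_ker_castHom H
  obtain ⟨s, hs, rfl⟩ := (Nat.dvd_prime_pow Nat.prime_two).1 hd
  refine ⟨s, hs, fun v w => ?_⟩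
  calc
    _ ↔ binaryEquiv s (v ∘ Fin.castLE hs) = binaryEquiv s (w ∘ Fin.castLE hs) := by
      rw [AddMonoidHom.mem_ker, map_sub, sub_eq_zero]
      exact Eq.congr (castHom_vecToZMod hs v) (castHom_vecToZMod hs w)
    _ ↔ v ∈ lowCylinder s w := by
      rw [(binaryEquiv s).apply_eq_iff_eq, funext_iff]
      exact ⟨fun h i hi => h ⟨i, hi⟩, fun h i => h _ i.isLt⟩

variable {m δ : ℕ}

theorem sameType_lowCylinder (c d : Fin (m * δ) → ZMod 2) :
    SameType m δ (lowCylinder s c) (lowCylinder s d) := by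
  have hparallel : IsParallel m δ (· + (d - c)) fun j => (· + brickProj m δ (d - c) j) :=
    fun _ _ => rfl
  have htranslate :=
    hparallel.sameType_image (fun _ => AddGroup.addRight_bijective _) (lowCylinder s c)
  rwa [image_add_lowCylinder, add_sub_cancel] at htranslate

theorem brickIdx_lt_iff {q t : ℕ} (ht : t ≤ m) {j : Fin δ} {i : Fin m} :
    (brickIdx m δ j i : ℕ) < m * q + t ↔ (j : ℕ) < q ∨ (j : ℕ) = q ∧ (i : ℕ) < t := by
  have hi := i.isLt
  rcases lt_trichotomy (j : ℕ) q with hj | hj | hj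
  · have := Nat.mul_le_mul_left m (Nat.succ_le_of_lt hj)
    grind [brickIdx]
  · simp [brickIdx, hj]
  · have := Nat.mul_le_mul_left m (Nat.succ_le_of_lt hj)
    grind [brickIdx]

theorem mem_lowCylinder_iff_brickProj {q t : ℕ} (ht : t ≤ m) {v c : Fin (m * δ) → ZMod 2} :
    v ∈ lowCylinder (m * q + t) c ↔
      (∀ j : Fin δ, (j : ℕ) < q → brickProj m δ v j = brickProj m δ c j) ∧
        ∀ j : Fin δ, (j : ℕ) = q → brickProj m δ v j ∈ lowCylinder t (brickProj m δ c j) := by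
  have hbricks : v ∈ lowCylinder (m * q + t) c ↔
      ∀ j i, (brickIdx m δ j i : ℕ) < m * q + t → brickProj m δ v j i = brickProj m δ c j i :=
    brickIdx_bijective.surjective.forall.trans Prod.forall
  simp only [hbricks, brickIdx_lt_iff ht, or_imp, forall_and, and_imp, funext_iff]
  exact and_congr (forall_congr' fun j => forall_comm) (forall_congr' fun j => forall_comm)

theorem stdForm_lowCylinder_mul {q : ℕ} (hq : q ≤ δ) (c : Fin (m * δ) → ZMod 2) :
    StdForm m δ (lowCylinder (m * q) c) q 0 (δ - q) := by
  refine ⟨by omega, zero_le_one, brickProj m δ c, ∅, by simp, Set.ext fun v => ?_⟩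
  have hmem := mem_lowCylinder_iff_brickProj (q := q) (Nat.zero_le m) (v := v) (c := c)
  simpa [StdSet, lowCylinder] using hmem

theorem stdForm_lowCylinder_mul_add {q t : ℕ} (hq : q < δ) (ht : 0 < t) (htm : t < m)
    (c : Fin (m * δ) → ZMod 2) :
    StdForm m δ (lowCylinder (m * q + t) c) q 1 (δ - q - 1) := by
  refine ⟨by omega, le_rfl, brickProj m δ c, lowCylinder t (brickProj m δ c ⟨q, hq⟩), fun _ =>
    ⟨two_le_ncard_lowCylinder htm _, Nat.le_sub_one_of_lt (ncard_lowCylinder_lt ht (by omega) _)⟩,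
    Set.ext fun v => (mem_lowCylinder_iff_brickProj htm.le).trans (and_congr_right' ?_)⟩
  refine ⟨fun h _ j hj => ?_, fun h j hj => ?_⟩
  · obtain rfl : j = ⟨q, hq⟩ := Fin.ext hj
    exact h _ rfl
  · obtain rfl : j = ⟨q, hq⟩ := Fin.ext hj
    exact h rfl _ rfl

theorem exists_stdForm_lowCylinder (hs : 0 < s) (hsn : s < m * δ) (c : Fin (m * δ) → ZMod 2) :
    ∃ nw nr nb, nw ≠ δ ∧ nb ≠ δ ∧ StdForm m δ (lowCylinder s c) nw nr nb := by
  have hm : 0 < m := Nat.pos_of_mul_pos_right (hs.trans hsn)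
  obtain ⟨q, t, ht, rfl⟩ : ∃ q t, t < m ∧ m * q + t = s :=
    ⟨s / m, s % m, Nat.mod_lt s hm, Nat.div_add_mod s m⟩
  have hq : q < δ := Nat.lt_of_mul_lt_mul_left ((Nat.le_add_right _ _).trans_lt hsn)
  rcases t.eq_zero_or_pos with rfl | ht0
  · have hq0 : 0 < q := Nat.pos_of_mul_pos_left hs
    exact ⟨q, 0, δ - q, hq.ne, by omega, stdForm_lowCylinder_mul hq.le c⟩
  · exact ⟨q, 1, δ - q - 1, hq.ne, by omega, stdForm_lowCylinder_mul_add hq ht0 ht c⟩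

end LowCylinder

section NontrivialTypes

variable {m δ : ℕ}

/-- The map `lam` preserves no non-trivial type: it changes the type of every set in standard form
of type other than `(δ, 0, 0)` and `(0, 0, δ)`. -/
def PreservesNoNontrivialType (m δ : ℕ)
    (lam : (Fin (m * δ) → ZMod 2) → (Fin (m * δ) → ZMod 2)) : Prop :=
  ∀ (D : Set (Fin (m * δ) → ZMod 2)) (nw nr nb : ℕ),
    StdForm m δ D nw nr nb → nw ≠ δ → nb ≠ δ → ¬ SameType m δ D (lam '' D)

theorem eq_bot_or_eq_top_of_mapsCosets_comp
    {γ lam : (Fin (m * δ) → ZMod 2) → (Fin (m * δ) → ZMod 2)}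
    {γbrick : Fin δ → (Fin m → ZMod 2) → (Fin m → ZMod 2)}
    (hγ : IsParallel m δ γ γbrick) (hγbij : ∀ j, Function.Bijective (γbrick j))
    (hlam : Function.Injective lam) (hntp : PreservesNoNontrivialType m δ lam)
    {H : AddSubgroup (ZMod (2 ^ (m * δ)))}
    (hH : MapsCosets (binaryEquiv (m * δ)) (lam ∘ γ) H) : H = ⊥ ∨ H = ⊤ := by
  obtain ⟨s, hs, mem_iff⟩ := exists_sub_mem_iff_mem_lowCylinder H
  have mem_iff_zero (a) : a ∈ H ↔
      (binaryEquiv (m * δ)).symm a ∈ lowCylinder s ((binaryEquiv (m * δ)).symm 0) := by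
    simp [← mem_iff]
  rcases hs.eq_or_lt with rfl | hsn
  · refine .inl ((AddSubgroup.eq_bot_iff_forall H).2 fun a ha => ?_)
    exact (binaryEquiv (m * δ)).symm.injective <|
      funext fun i => (mem_iff_zero a).1 ha i i.isLt
  rcases s.eq_zero_or_pos with rfl | hs0
  · exact .inr ((AddSubgroup.eq_top_iff' H).2 fun a => (mem_iff_zero a).2 (by simp [lowCylinder]))
  have himage : lam '' (γ '' lowCylinder s 0) = lowCylinder s (lam (γ 0)) := by
    rw [← Set.image_comp]
    refine image_lowCylinder_eq_of_mapsTo (hlam.comp (hγ.bijective hγbij).injective) fun v hv => ?_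
    exact (mem_iff _ _).1 (hH ((mem_iff v 0).2 hv))
  obtain ⟨nw, nr, nb, hnw, hnb, hstd⟩ := exists_stdForm_lowCylinder hs0 hsn 0
  refine absurd ?_ (hntp _ nw nr nb (hγ.stdForm_image hγbij hstd) hnw hnb)
  rw [himage]
  exact (hγ.sameType_image hγbij _).symm.trans (sameType_lowCylinder 0 _)

end NontrivialTypes

theorem stmt_18_general (m δ : ℕ) (γbrick : Fin δ → (Fin m → ZMod 2) → (Fin m → ZMod 2))
    (hγbij : ∀ j, Function.Bijective (γbrick j))
    (γ : (Fin (m * δ) → ZMod 2) → (Fin (m * δ) → ZMod 2)) (hγ : IsParallel m δ γ γbrick)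
    (lam : (Fin (m * δ) → ZMod 2) → (Fin (m * δ) → ZMod 2)) (hlam : Function.Bijective lam)
    (hntp : PreservesNoNontrivialType m δ lam) :
    (∀ v w, ∃ g ∈ Subgroup.closure (roundFunctions (m * δ) (lam ∘ γ)), g v = w) ∧
    ∀ B, Setoid.IsPartition B →
      (∀ b ∈ B, ∀ g ∈ Subgroup.closure (roundFunctions (m * δ) (lam ∘ γ)), g '' b ∈ B) →
      B = {Set.univ} ∨ B = Set.range fun v => {v} := by
  set Γ := Subgroup.closure (roundFunctions (m * δ) (lam ∘ γ))
  have hprim : MulAction.IsPreprimitive Γ ((Fin (m * δ) → ZMod 2) × (Fin (m * δ) → ZMod 2)) :=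
    isPreprimitive_closure_roundFunctions (hlam.comp (hγ.bijective hγbij)) fun _ =>
      eq_bot_or_eq_top_of_mapsCosets_comp hγ hγbij hlam.injective hntp
  refine ⟨fun v w => ?_, fun B hB hinv => ?_⟩
  · obtain ⟨⟨g, hg⟩, hgv⟩ := MulAction.exists_smul_eq Γ v w
    exact ⟨g, hg, hgv⟩
  · exact invariant_partition_trivial (G := Γ) hB fun b hb g => hinv b hb g g.2

/-- **primitivity of the generalized GOST-like cipher.** Let `γ` be a
parallel S-box with bijective bricks `γ_j` satisfying `γ_j(0) ≠ 0`, `λ` a bijective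
linear map preserving no non-trivial type, `ρ = λ ∘ γ`, and let
`𝒫(x₁,x₂) = (x₂, x₁ ⊕ ρ(x₂))` and `σ_{(k₁,k₂)}(x₁,x₂) = (x₁ ⊞ k₁, x₂ ⊞ k₂)`.  Then the
group generated by the round functions `σ_k` then `𝒫` then `σ_h` is primitive on
`V = 𝔽₂ⁿ × 𝔽₂ⁿ`. -/
theorem stmt_18 (m δ : ℕ) (hm : 2 ≤ m) (hδ : 2 ≤ δ)
    (γbrick : Fin δ → (Fin m → ZMod 2) → (Fin m → ZMod 2))
    (hγbij : ∀ j, Function.Bijective (γbrick j))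
    (hγ0 : ∀ j, γbrick j 0 ≠ 0)
    (γ : (Fin (m * δ) → ZMod 2) → (Fin (m * δ) → ZMod 2))
    (hγ : ∀ v (j : Fin δ), brickProj m δ (γ v) j = γbrick j (brickProj m δ v j))
    (lam : (Fin (m * δ) → ZMod 2) →ₗ[ZMod 2] (Fin (m * δ) → ZMod 2))
    (hlam : Function.Bijective lam)
    (hntp : ∀ (D : Set (Fin (m * δ) → ZMod 2)) (nw nr nb : ℕ),
      StdForm m δ D nw nr nb → nw ≠ δ → nb ≠ δ →
      ¬ SameType m δ D ((fun v => lam v) '' D)) :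
    (∀ v w : (Fin (m * δ) → ZMod 2) × (Fin (m * δ) → ZMod 2),
      ∃ g ∈ Subgroup.closure
        {g : Equiv.Perm ((Fin (m * δ) → ZMod 2) × (Fin (m * δ) → ZMod 2)) |
          ∃ k₁ k₂ h₁ h₂, ∀ x : (Fin (m * δ) → ZMod 2) × (Fin (m * δ) → ZMod 2),
            g x = (boxAdd (m * δ) (boxAdd (m * δ) x.2 k₂) h₁,
                   boxAdd (m * δ)
                     (boxAdd (m * δ) x.1 k₁ + lam (γ (boxAdd (m * δ) x.2 k₂))) h₂)},
        g v = w) ∧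
    (∀ B : Set (Set ((Fin (m * δ) → ZMod 2) × (Fin (m * δ) → ZMod 2))),
      Setoid.IsPartition B →
      (∀ b ∈ B, ∀ g ∈ Subgroup.closure
        {g : Equiv.Perm ((Fin (m * δ) → ZMod 2) × (Fin (m * δ) → ZMod 2)) |
          ∃ k₁ k₂ h₁ h₂, ∀ x : (Fin (m * δ) → ZMod 2) × (Fin (m * δ) → ZMod 2),
            g x = (boxAdd (m * δ) (boxAdd (m * δ) x.2 k₂) h₁,
                   boxAdd (m * δ)
                     (boxAdd (m * δ) x.1 k₁ + lam (γ (boxAdd (m * δ) x.2 k₂))) h₂)},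
        (⇑g) '' b ∈ B) →
      B = {Set.univ} ∨
        B = Set.range fun v : (Fin (m * δ) → ZMod 2) × (Fin (m * δ) → ZMod 2) =>
          ({v} : Set ((Fin (m * δ) → ZMod 2) × (Fin (m * δ) → ZMod 2)))) :=
  stmt_18_general m δ γbrick hγbij γ hγ lam hlam hntp
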